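/- If state j of a Markov chain is null recurrent, then the fraction of time spent at j converges to zero almost surely: P(lim_{n→∞} M_j(n)/n = 0) = 1. -/

import Mathlib

open MeasureTheory Filter Topology
open scoped ENNReal NNReal

variable {S : Type*} [Countable S] [DecidableEq S]

/-- k-step transition probabilities of a transition matrix `P`. -/
noncomputable def kstep (P : S → S → ℝ) : ℕ → S → S → ℝ
  | 0 => fun i j => if i = j then 1 else 0
  | (k+1) => fun i j => ∑' l, kstep P k i l * P l j

/-- first passage probabilities `f^{(n)}_{ij}` (first visit to `j` at time exactly `n`). -/
noncomputable def fpass (P : S → S → ℝ) (j : S) : ℕ → S → ℝ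
  | 0 => fun _ => 0
  | 1 => fun i => P i j
  | (n+2) => fun i => ∑' l, if l = j then 0 else P i l * fpass P j (n+1) l

/-- probability `f_{ij}` of ever reaching `j` from `i`. -/
noncomputable def hitProb (P : S → S → ℝ) (i j : S) : ℝ := ∑' n, fpass P j n i

/-- mean return time `m_j` to `j` (in `ℝ≥0∞`). -/
noncomputable def meanReturn (P : S → S → ℝ) (j : S) : ℝ≥0∞ :=
  ∑' n : ℕ, (n : ℝ≥0∞) * ENNReal.ofReal (fpass P j n j)

def PositiveRecurrent (P : S → S → ℝ) (j : S) : Prop :=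
  hitProb P j j = 1 ∧ meanReturn P j < ⊤

def NullRecurrent (P : S → S → ℝ) (j : S) : Prop :=
  hitProb P j j = 1 ∧ meanReturn P j = ⊤

def Transient (P : S → S → ℝ) (j : S) : Prop := hitProb P j j < 1

/-- `X` is a time-homogeneous Markov chain on `(Ω, μ)` with transition matrix `P`. -/
structure IsMarkovChain {Ω : Type*} [MeasurableSpace Ω] [MeasurableSpace S] (μ : Measure Ω)
    (X : ℕ → Ω → S) (P : S → S → ℝ) : Prop where
  isProb : IsProbabilityMeasure μ
  meas : ∀ n, Measurable (X n)
  nonneg : ∀ i j, 0 ≤ P i j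
  rowSum : ∀ i, ∑' j, P i j = 1
  markov : ∀ n (j : S) (f : ℕ → S),
    μ ({ω | X (n+1) ω = j} ∩ {ω | ∀ m ≤ n, X m ω = f m})
      = ENNReal.ofReal (P (f n) j) * μ {ω | ∀ m ≤ n, X m ω = f m}

/-- `M_j(n)`: number of visits to `j` at times `1,…,n`. -/
noncomputable def visits {Ω : Type*} (X : ℕ → Ω → S) (j : S) (n : ℕ) (ω : Ω) : ℝ :=
  ∑ k ∈ Finset.Icc 1 n, if X k ω = j then (1:ℝ) else 0

set_option linter.unusedSectionVars false

/-- For a chain with transition matrix `p` started at `i`, the probability of at least `m` visits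
to `j` at times `1,…,n`. -/
noncomputable def visitTail (p : S → S → ℝ≥0∞) (j : S) : ℕ → ℕ → S → ℝ≥0∞
  | 0, _ => fun _ => 1
  | _ + 1, 0 => fun _ => 0
  | m + 1, n + 1 => fun i =>
      ∑' l, p i l * if l = j then visitTail p j m n l else visitTail p j (m + 1) n l

/-- If `h` is the generating function at `r` of the first passage time to `j`, then the tail of the
number of visits decays geometrically with ratio `h j`. -/
theorem visitTail_mul_pow_le (p : S → S → ℝ≥0∞) (j : S) (r : ℝ≥0∞) (hr : r ≤ 1) (h : S → ℝ≥0∞)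
    (hh : ∀ i, r * ∑' l, p i l * (if l = j then 1 else h l) = h i) (n m : ℕ) (i : S) :
    visitTail p j (m + 1) n i * r ^ n ≤ h i * h j ^ m := by
  induction n generalizing m i with
  | zero => simp [visitTail]
  | succ n ih =>
    rw [visitTail, pow_succ, ← hh i, ← ENNReal.tsum_mul_right, mul_assoc, ← ENNReal.tsum_mul_right,
      ← ENNReal.tsum_mul_left]
    refine ENNReal.tsum_le_tsum fun l => ?_
    have key : (if l = j then visitTail p j m n l else visitTail p j (m + 1) n l) * r ^ n
        ≤ (if l = j then 1 else h l) * h j ^ m := by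
      split_ifs with hl
      · subst hl
        cases m with
        | zero => simpa [visitTail] using pow_le_one' hr n
        | succ m => simpa [pow_succ, mul_comm] using ih m l
      · exact ih m l
    calc _ = r * (p i l *
          ((if l = j then visitTail p j m n l else visitTail p j (m + 1) n l) * r ^ n)) := by ring
      _ ≤ r * (p i l * ((if l = j then 1 else h l) * h j ^ m)) := by gcongr
      _ = _ := by ring

section FirstPassage

variable {P : S → S → ℝ}

theorem fpass_mem_Icc (h0 : ∀ i l, 0 ≤ P i l) (h1 : ∀ i, ∑' l, P i l = 1) (j : S) (n : ℕ) (i : S) :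
    fpass P j n i ∈ Set.Icc 0 1 := by
  have hs : ∀ i, Summable (P i) := fun i => by
    by_contra hc
    simpa [tsum_eq_zero_of_not_summable hc] using h1 i
  induction n using Nat.twoStepInduction generalizing i with
  | zero => simp [fpass]
  | one => exact ⟨h0 i j, (h1 i) ▸ (hs i).le_tsum j fun l _ => h0 i l⟩
  | more n _ ih =>
    have hle : ∀ l, (if l = j then 0 else P i l * fpass P j (n + 1) l) ≤ P i l := fun l => by
      split_ifs
      · exact h0 i l
      · exact mul_le_of_le_one_right (h0 i l) (ih l).2
    have hnn : ∀ l, 0 ≤ (if l = j then 0 else P i l * fpass P j (n + 1) l) := fun l => by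
      split_ifs
      · exact le_rfl
      · exact mul_nonneg (h0 i l) (ih l).1
    exact ⟨tsum_nonneg hnn,
      (h1 i) ▸ (Summable.of_nonneg_of_le hnn hle (hs i)).tsum_le_tsum hle (hs i)⟩

theorem ofReal_fpass_add_two (h0 : ∀ i l, 0 ≤ P i l) (h1 : ∀ i, ∑' l, P i l = 1) (j : S) (n : ℕ)
    (i : S) : ENNReal.ofReal (fpass P j (n + 2) i) =
      ∑' l, ENNReal.ofReal (P i l) * if l = j then 0 else ENNReal.ofReal (fpass P j (n + 1) l) := by
  have hs : Summable (P i) := by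
    by_contra hc
    simpa [tsum_eq_zero_of_not_summable hc] using h1 i
  have hf := fpass_mem_Icc h0 h1 j (n + 1)
  have hnn : ∀ l, 0 ≤ (if l = j then 0 else P i l * fpass P j (n + 1) l) := fun l => by
    split_ifs
    · exact le_rfl
    · exact mul_nonneg (h0 i l) (hf l).1
  have hle : ∀ l, (if l = j then 0 else P i l * fpass P j (n + 1) l) ≤ P i l := fun l => by
    split_ifs
    · exact h0 i l
    · exact mul_le_of_le_one_right (h0 i l) (hf l).2
  rw [fpass, ENNReal.ofReal_tsum_of_nonneg hnn (.of_nonneg_of_le hnn hle hs)]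
  refine tsum_congr fun l => ?_
  split_ifs
  · simp
  · exact ENNReal.ofReal_mul (h0 i l)

/-- The generating function of the first passage time from `i` to `j`. -/
noncomputable def fpassGen (P : S → S → ℝ) (j : S) (r : ℝ≥0∞) (i : S) : ℝ≥0∞ :=
  ∑' n, ENNReal.ofReal (fpass P j n i) * r ^ n

theorem mul_tsum_fpassGen (h0 : ∀ i l, 0 ≤ P i l) (h1 : ∀ i, ∑' l, P i l = 1) (j : S) (r : ℝ≥0∞)
    (i : S) : r * ∑' l, ENNReal.ofReal (P i l) * (if l = j then 1 else fpassGen P j r l)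
      = fpassGen P j r i := by
  have hgen : ∀ l, fpassGen P j r l = ∑' n, ENNReal.ofReal (fpass P j (n + 1) l) * r ^ (n + 1) :=
    fun l => by
      rw [fpassGen, tsum_eq_zero_add' ENNReal.summable]
      simp [fpass]
  have hsplit : ∀ l, ENNReal.ofReal (P i l) * (if l = j then 1 else fpassGen P j r l)
      = (if l = j then ENNReal.ofReal (P i l) else 0) + ∑' n, (ENNReal.ofReal (P i l) *
        if l = j then 0 else ENNReal.ofReal (fpass P j (n + 1) l)) * r ^ (n + 1) := fun l => by
    split_ifs
    · simp
    · simp only [hgen, mul_assoc, ENNReal.tsum_mul_left, zero_add]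
  simp_rw [hsplit]
  rw [ENNReal.tsum_add, tsum_ite_eq, ENNReal.tsum_comm, hgen i, mul_add, ← ENNReal.tsum_mul_left,
    tsum_eq_zero_add' (f := fun n => ENNReal.ofReal (fpass P j (n + 1) i) * r ^ (n + 1))
      ENNReal.summable]
  congr 1
  · simp [fpass, mul_comm]
  · refine tsum_congr fun n => ?_
    rw [ENNReal.tsum_mul_right, ← ofReal_fpass_add_two h0 h1]
    ring

theorem fpassGen_lt_top (h0 : ∀ i l, 0 ≤ P i l) (h1 : ∀ i, ∑' l, P i l = 1) (j : S) {r : ℝ≥0∞}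
    (hr : r < 1) (i : S) : fpassGen P j r i < ⊤ := by
  refine lt_of_le_of_lt (ENNReal.tsum_le_tsum (g := fun n => r ^ n) fun n =>
    mul_le_of_le_one_left' (ENNReal.ofReal_le_one.2 (fpass_mem_Icc h0 h1 j n i).2)) ?_
  rw [ENNReal.tsum_geometric]
  exact ENNReal.inv_lt_top.2 (tsub_pos_of_lt hr)

end FirstPassage

/-- If `f` has truncated mean larger than `A`, then near `1` its truncated generating function
falls below one faster than `r ^ A`. -/
theorem exists_one_sub_sum_lt_pow (f : ℕ → ℝ) (A K : ℕ)
    (hA : (A : ℝ) < ∑ n ∈ Finset.range K, n * f n) :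
    ∃ r : ℝ, 0 < r ∧ r < 1 ∧ 1 - ∑ n ∈ Finset.range K, f n * (1 - r ^ n) < r ^ A := by
  set G : ℝ → ℝ := fun r => r ^ A + ∑ n ∈ Finset.range K, f n * (1 - r ^ n) with hG
  have hG1 : G 1 = 1 := by simp [hG]
  have hd : HasDerivAt G (A - ∑ n ∈ Finset.range K, n * f n) 1 := by
    have h2 : HasDerivAt (fun r : ℝ => ∑ n ∈ Finset.range K, f n * (1 - r ^ n))
        (∑ n ∈ Finset.range K, f n * (-(n * 1 ^ (n - 1)))) 1 :=
      HasDerivAt.fun_sum fun n _ => ((hasDerivAt_pow n (1 : ℝ)).const_sub 1).const_mul (f n)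
    refine ((hasDerivAt_pow A (1 : ℝ)).fun_add h2).congr_deriv ?_
    simp [sub_eq_add_neg, mul_comm, Finset.sum_neg_distrib]
  have hs := (hasDerivAt_iff_tendsto_slope.1 hd).mono_left
    (nhdsWithin_mono 1 fun x (hx : x ∈ Set.Iio 1) => hx.ne)
  obtain ⟨r, hr, hr0, hr1⟩ := ((hs.eventually (gt_mem_nhds (sub_neg.2 hA))).and
    ((eventually_nhdsWithin_of_eventually_nhds (lt_mem_nhds one_pos)).and
      (eventually_mem_nhdsWithin (a := (1 : ℝ)) (s := Set.Iio 1)))).exists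
  have hr1 : r < 1 := hr1
  refine ⟨r, hr0, hr1, ?_⟩
  rw [slope_def_field, hG1, div_neg_iff] at hr
  rcases hr with hr | hr <;> simp only [hG] at hr <;> linarith [hr.1, hr.2]

theorem NullRecurrent.exists_fpassGen_lt_pow {P : S → S → ℝ} (h0 : ∀ i l, 0 ≤ P i l)
    (h1 : ∀ i, ∑' l, P i l = 1) {j : S} (hj : NullRecurrent P j) (A : ℕ) :
    ∃ r : ℝ≥0∞, r ≠ 0 ∧ r < 1 ∧ fpassGen P j r j < r ^ A := by
  set f : ℕ → ℝ := fun n => fpass P j n j with hf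
  have hf0 : ∀ n, 0 ≤ f n := fun n => (fpass_mem_Icc h0 h1 j n j).1
  have hsum : ∑' n, f n = 1 := hj.1
  have hs : Summable f := by
    by_contra hc
    simp [tsum_eq_zero_of_not_summable hc] at hsum
  obtain ⟨K, hK⟩ : ∃ K, (A : ℝ) < ∑ n ∈ Finset.range K, n * f n := by
    by_contra! hc
    have : meanReturn P j ≤ ENNReal.ofReal A := by
      refine ENNReal.tsum_le_of_sum_range_le fun K => ?_
      refine le_trans (le_of_eq ?_) (ENNReal.ofReal_le_ofReal (hc K))
      rw [ENNReal.ofReal_sum_of_nonneg fun n _ => mul_nonneg n.cast_nonneg (hf0 n)]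
      refine Finset.sum_congr rfl fun n _ => ?_
      rw [ENNReal.ofReal_mul n.cast_nonneg, ENNReal.ofReal_natCast]
    exact absurd (hj.2 ▸ this) (by simp)
  obtain ⟨r, hr0, hr1, hr⟩ := exists_one_sub_sum_lt_pow f A K hK
  refine ⟨ENNReal.ofReal r, by simpa using hr0, by simpa using hr1, ?_⟩
  have hle : ∀ n, f n * r ^ n ≤ f n := fun n =>
    mul_le_of_le_one_right (hf0 n) (pow_le_one₀ hr0.le hr1.le)
  have hnn : ∀ n, 0 ≤ f n * r ^ n := fun n => mul_nonneg (hf0 n) (by positivity)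
  have hs' : Summable fun n => f n * r ^ n := .of_nonneg_of_le hnn hle hs
  have hgen : fpassGen P j (ENNReal.ofReal r) j = ENNReal.ofReal (∑' n, f n * r ^ n) := by
    rw [ENNReal.ofReal_tsum_of_nonneg hnn hs']
    refine tsum_congr fun n => ?_
    rw [ENNReal.ofReal_mul (hf0 n), ENNReal.ofReal_pow hr0.le]
  rw [hgen, ← ENNReal.ofReal_pow hr0.le, ENNReal.ofReal_lt_ofReal_iff (by positivity)]
  refine lt_of_le_of_lt ?_ hr
  have := (hs.sub hs').sum_le_tsum (Finset.range K) fun n _ => sub_nonneg.2 (hle n)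
  rw [hs.tsum_sub hs', hsum] at this
  simp only [mul_sub, mul_one]
  linarith

theorem visits_mono {Ω : Type*} (X : ℕ → Ω → S) (j : S) (ω : Ω) : Monotone fun n => visits X j n ω :=
  fun _ _ h => Finset.sum_le_sum_of_subset_of_nonneg (Finset.Icc_subset_Icc_right h)
    fun _ _ _ => by split_ifs <;> norm_num

theorem visits_nonneg {Ω : Type*} (X : ℕ → Ω → S) (j : S) (n : ℕ) (ω : Ω) : 0 ≤ visits X j n ω :=
  Finset.sum_nonneg fun _ _ => by split_ifs <;> norm_num

theorem tendsto_visits_div_of_eventually_le {Ω : Type*} (X : ℕ → Ω → S) (j : S) (ω : Ω)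
    (h : ∀ A : ℕ, ∀ᶠ m : ℕ in atTop, visits X j (A * m) ω ≤ m) :
    Tendsto (fun n : ℕ => visits X j n ω / (n : ℝ)) atTop (𝓝 0) := by
  refine tendsto_order.2 ⟨fun a ha => .of_forall fun n =>
    ha.trans_le (div_nonneg (visits_nonneg X j n ω) n.cast_nonneg), fun ε hε => ?_⟩
  obtain ⟨B, hB⟩ := exists_nat_gt (2 / ε)
  have hB0 : (0 : ℝ) < B := (by positivity : (0 : ℝ) < 2 / ε).trans hB
  have hB' : 0 < B := by exact_mod_cast hB0
  have hdiv : Tendsto (fun n : ℕ => n / B + 1) atTop atTop :=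
    tendsto_atTop_mono (fun _ => Nat.le_succ _) (Nat.tendsto_div_const_atTop hB'.ne')
  filter_upwards [hdiv.eventually (h B), eventually_ge_atTop B] with n hn hnB
  have hn0 : (0 : ℝ) < n := by exact_mod_cast hB'.trans_le hnB
  have h1 : visits X j n ω ≤ ((n / B + 1 : ℕ) : ℝ) :=
    (visits_mono X j ω (Nat.lt_mul_div_succ n hB').le).trans hn
  have h2 : ((n / B : ℕ) : ℝ) ≤ n / B := Nat.cast_div_le
  have h3 : (1 : ℝ) ≤ n / B := (one_le_div hB0).2 (by exact_mod_cast hnB)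
  rw [div_lt_iff₀ hn0]
  push_cast at h1
  have h4 : (2 : ℝ) * (n / B) < ε * n := by
    rw [div_lt_iff₀ hε] at hB
    rw [← mul_div_assoc, div_lt_iff₀ hB0]
    nlinarith
  linarith

section Chain

variable {Ω : Type*} [MeasurableSpace Ω] [MeasurableSpace S] {μ : Measure Ω} {X : ℕ → Ω → S}
  {P : S → S → ℝ}

/-- `μ` acts here as an outer measure: the events need not be measurable. -/
theorem IsMarkovChain.measure_le_visitTail (hMC : IsMarkovChain μ X P) (j : S) (n m N : ℕ)
    (f : ℕ → S) :
    μ {ω | (∀ k ≤ N, X k ω = f k) ∧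
        m ≤ ∑ k ∈ Finset.range n, if X (N + 1 + k) ω = j then 1 else 0}
      ≤ μ {ω | ∀ k ≤ N, X k ω = f k} *
        visitTail (fun i l => ENNReal.ofReal (P i l)) j m n (f N) := by
  induction n generalizing m N f with
  | zero =>
    cases m with
    | zero => simp [visitTail]
    | succ m => simp [visitTail]
  | succ n ih =>
    cases m with
    | zero => simp [visitTail]
    | succ m =>
      have hcyl : ∀ l, {ω | ∀ k ≤ N + 1, X k ω = Function.update f (N + 1) l k}
          = {ω | X (N + 1) ω = l} ∩ {ω | ∀ k ≤ N, X k ω = f k} := fun l => by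
        ext ω
        simp only [Set.mem_ofPred_eq, Set.mem_inter_iff, Nat.le_succ_iff_eq_or_le, or_imp,
          forall_and, forall_eq, Function.update_self, Nat.succ_eq_add_one]
        refine and_congr_right fun _ => forall₂_congr fun k hk => ?_
        rw [Function.update_of_ne (by omega)]
      have hsub : {ω | (∀ k ≤ N, X k ω = f k) ∧
          m + 1 ≤ ∑ k ∈ Finset.range (n + 1), if X (N + 1 + k) ω = j then 1 else 0} ⊆
          ⋃ l, {ω | (∀ k ≤ N + 1, X k ω = Function.update f (N + 1) l k) ∧
            (if l = j then m else m + 1) ≤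
              ∑ k ∈ Finset.range n, if X (N + 1 + 1 + k) ω = j then 1 else 0} := by
        rintro ω ⟨h1, h2⟩
        refine Set.mem_iUnion.2 ⟨X (N + 1) ω, ?_, ?_⟩
        · exact (hcyl _).ge ⟨rfl, h1⟩
        · rw [Finset.sum_range_succ'] at h2
          simp only [add_zero, ← add_assoc, add_right_comm _ _ 1] at h2 ⊢
          split_ifs at h2 ⊢ <;> omega
      refine (measure_mono hsub).trans ((measure_iUnion_le _).trans ?_)
      rw [visitTail, ← ENNReal.tsum_mul_left]
      refine ENNReal.tsum_le_tsum fun l => (ih _ _ _).trans (le_of_eq ?_)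
      rw [hcyl, hMC.markov, Function.update_self]
      split_ifs <;> ring

theorem IsMarkovChain.ae_eventually_visits_le (hMC : IsMarkovChain μ X P) {j : S}
    (hj : NullRecurrent P j) (A : ℕ) :
    ∀ᵐ ω ∂μ, ∀ᶠ m : ℕ in atTop, visits X j (A * m) ω ≤ m := by
  have := hMC.isProb
  suffices h : ∀ i, ∀ᵐ ω ∂μ, ∀ᶠ m : ℕ in atTop, ¬ (X 0 ω = i ∧ m + 1 ≤
      ∑ k ∈ Finset.range (A * m), if X (0 + 1 + k) ω = j then 1 else 0) by
    filter_upwards [ae_all_iff.2 h] with ω hω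
    filter_upwards [hω (X 0 ω)] with m hm
    have hm : (∑ k ∈ Finset.range (A * m), if X (0 + 1 + k) ω = j then 1 else 0) ≤ m := by
      by_contra hc
      exact hm ⟨rfl, by omega⟩
    have hv : visits X j (A * m) ω =
        ((∑ k ∈ Finset.range (A * m), if X (0 + 1 + k) ω = j then 1 else 0 : ℕ) : ℝ) := by
      rw [visits, ← Finset.Ico_add_one_right_eq_Icc, Finset.sum_Ico_eq_sum_range]
      simp
    rw [hv]
    exact_mod_cast hm
  intro i
  obtain ⟨r, hr0, hr1, hr⟩ := hj.exists_fpassGen_lt_pow hMC.nonneg hMC.rowSum A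
  suffices h : ∑' m : ℕ, μ {ω | X 0 ω = i ∧ m + 1 ≤
      ∑ k ∈ Finset.range (A * m), if X (0 + 1 + k) ω = j then 1 else 0} < ⊤ by
    filter_upwards [measure_eq_zero_iff_ae_notMem.1 (measure_setOfPred_frequently_eq_zero h.ne)]
      with ω hω
    exact not_frequently.1 hω
  refine lt_of_le_of_lt (ENNReal.tsum_le_tsum (g := fun m =>
    fpassGen P j r i * (fpassGen P j r j / r ^ A) ^ m) fun m => ?_) ?_
  · have hμ := hMC.measure_le_visitTail j (A * m) (m + 1) 0 fun _ => i
    simp only [Nat.le_zero, forall_eq] at hμ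
    refine hμ.trans ((mul_le_of_le_one_left' prob_le_one).trans ?_)
    have hv := visitTail_mul_pow_le _ j r hr1.le _ (mul_tsum_fpassGen hMC.nonneg hMC.rowSum j r)
      (A * m) m i
    rw [ENNReal.div_eq_inv_mul, mul_pow, mul_left_comm, ← ENNReal.inv_pow, ← pow_mul,
      ← ENNReal.div_eq_inv_mul]
    exact ENNReal.le_div_iff_mul_le (.inl (pow_ne_zero _ hr0))
      (.inl (ENNReal.pow_ne_top hr1.ne_top)) |>.2 hv
  · rw [ENNReal.tsum_mul_left, ENNReal.tsum_geometric]
    refine ENNReal.mul_lt_top (fpassGen_lt_top hMC.nonneg hMC.rowSum j hr1 i)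
      (ENNReal.inv_lt_top.2 (tsub_pos_of_lt ?_))
    exact ENNReal.div_lt_of_lt_mul (by simpa using hr)

end Chain

/-- If `j` is null recurrent then the fraction of time spent at `j` converges to `0`
almost surely. -/
theorem visits_div_n_tendsto_zero_of_nullRecurrent
    {Ω : Type*} [MeasurableSpace Ω] [MeasurableSpace S] (μ : Measure Ω)
    (X : ℕ → Ω → S) (P : S → S → ℝ) (hMC : IsMarkovChain μ X P) (j : S)
    (hj : NullRecurrent P j) :
    μ {ω | Tendsto (fun n : ℕ => visits X j n ω / (n : ℝ)) atTop (𝓝 0)} = 1 := by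
  have := hMC.isProb
  have h : ∀ᵐ ω ∂μ, Tendsto (fun n : ℕ => visits X j n ω / (n : ℝ)) atTop (𝓝 0) := by
    filter_upwards [ae_all_iff.2 (hMC.ae_eventually_visits_le hj)] with ω hω
    exact tendsto_visits_div_of_eventually_le X j ω hω
  rw [measure_congr (eventuallyEq_univ.2 h), measure_univ]
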